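/- arXiv:2108.08699 — 6 statements merged into one kernel-verified Lean document; each statement's English description precedes it below -/
import Mathlib

section
/- Let x, y be real numbers, let m, n be positive integers, and for each i = 1,…,m let ε_i ∈ {1, −1} and let w_{i,1},…,w_{i,n} be nonzero integers. Set p_i = #{j ∈ {1,…,n} : w_{i,j} > 0}. Suppose there is a real constant c such that for every real q with 0 < q < 1 one has ∑_{i=1}^m ε_i ∏_{j=1}^n (x + y·q^{w_{i,j}})/(1 − q^{w_{i,j}}) = c. Then c = ∑_{i=1}^m ε_i · x^{p_i} · (−y)^{n − p_i}. -/
open Filter Topology in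
theorem aux_lim_pos (x y : ℝ) (k : ℕ) (hk : k ≠ 0) :
    Tendsto (fun q : ℝ => (x + y * q ^ k) / (1 - q ^ k)) (𝓝[>] 0) (𝓝 x) := by
  have h : ContinuousAt (fun q : ℝ => (x + y * q ^ k) / (1 - q ^ k)) 0 := by
    apply ContinuousAt.div (by fun_prop) (by fun_prop)
    simp [hk]
  have h2 := h.tendsto
  simp only [zero_pow hk, mul_zero, add_zero, sub_zero, div_one] at h2
  exact h2.mono_left nhdsWithin_le_nhds

open Filter Topology in
theorem aux_lim (x y : ℝ) (w : ℤ) (hw : w ≠ 0) :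
    Tendsto (fun q : ℝ => (x + y * q ^ w) / (1 - q ^ w)) (𝓝[>] 0)
      (𝓝 (if 0 < w then x else -y)) := by
  obtain ⟨k, rfl | rfl⟩ := w.eq_nat_or_neg
  · have hk : k ≠ 0 := by rintro rfl; simp at hw
    have : (0 : ℤ) < k := by omega
    simpa [this, Nat.pos_of_ne_zero hk] using aux_lim_pos x y k hk
  · have hk : k ≠ 0 := by rintro rfl; simp at hw
    have h0 : ¬ (0 : ℤ) < -(k : ℤ) := by omega
    rw [if_neg h0]
    refine (aux_lim_pos (-y) (-x) k hk).congr' ?_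
    filter_upwards [Ioo_mem_nhdsGT (zero_lt_one (α := ℝ))] with q hq
    have h1 : q ^ k < 1 := pow_lt_one₀ hq.1.le hq.2 hk
    have h2 : 0 < q ^ k := pow_pos hq.1 k
    rw [zpow_neg, zpow_natCast]
    generalize q ^ k = t at h1 h2
    have h3 : 1 - t ≠ 0 := by linarith
    have h4 : t - 1 ≠ 0 := by linarith
    have h5 : 1 - t⁻¹ = (t - 1) / t := by field_simp
    rw [h5]
    field_simp
    ring

/-- Generalized Atiyah–Hirzebruch localization formula for the `T_{x,y}`-genus,
with rigidity (constancy in `q` on `(0,1)`) as a hypothesis. -/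
theorem stmt_0 (x y : ℝ) (m n : ℕ) (hm : 0 < m) (hn : 0 < n)
    (ε : Fin m → ℝ) (hε : ∀ i, ε i = 1 ∨ ε i = -1)
    (w : Fin m → Fin n → ℤ) (hw : ∀ i j, w i j ≠ 0)
    (p : Fin m → ℕ) (hp : ∀ i, p i = (Finset.univ.filter fun j => 0 < w i j).card)
    (c : ℝ)
    (hc : ∀ q : ℝ, 0 < q → q < 1 →
      ∑ i, ε i * ∏ j, (x + y * q ^ (w i j)) / (1 - q ^ (w i j)) = c) :
    c = ∑ i, ε i * x ^ (p i) * (-y) ^ (n - p i) := by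
  have h1 : Filter.Tendsto (fun q : ℝ => ∑ i, ε i * ∏ j, (x + y * q ^ (w i j)) / (1 - q ^ (w i j)))
      (nhdsWithin 0 (Set.Ioi 0)) (nhds (∑ i, ε i * ∏ j, (if 0 < w i j then x else -y))) :=
    tendsto_finsetSum _ fun i _ => (tendsto_finsetProd _ fun j _ =>
      aux_lim x y (w i j) (hw i j)).const_mul _
  have h2 : Filter.Tendsto (fun q : ℝ => ∑ i, ε i * ∏ j, (x + y * q ^ (w i j)) / (1 - q ^ (w i j)))
      (nhdsWithin 0 (Set.Ioi 0)) (nhds c) := by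
    refine tendsto_const_nhds.congr' ?_
    filter_upwards [Ioo_mem_nhdsGT (zero_lt_one (α := ℝ))] with q hq
    exact (hc q hq.1 hq.2).symm
  rw [tendsto_nhds_unique h2 h1]
  refine Finset.sum_congr rfl fun i _ => ?_
  have h3 := Finset.card_filter_add_card_filter_not (s := Finset.univ) (fun j => 0 < w i j)
  rw [Finset.card_univ, Fintype.card_fin, ← hp i] at h3
  rw [Finset.prod_ite, Finset.prod_const, Finset.prod_const, ← hp i, mul_assoc,
    show n - p i = (Finset.univ.filter fun j => ¬ 0 < w i j).card by omega]
end

section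
/- Let m, n be positive integers, and for each i = 1,…,m let ε_i ∈ {1, −1} and let w_{i,1},…,w_{i,n} be nonzero integers. For 0 ≤ l ≤ n define the rational function χ_l = ∑_{i=1}^m ε_i · σ_l(q^{w_{i,1}},…,q^{w_{i,n}}) / ∏_{j=1}^n (1 − q^{w_{i,j}}) in the field ℚ(q) of rational functions over ℚ. If for every 0 ≤ l ≤ n the element χ_l is a constant, equal to the image of a rational number c_l, then c_l = (−1)^n · c_{n−l} for all 0 ≤ l ≤ n. -/
/-- The `l`-th elementary symmetric polynomial evaluated at `t 0, …, t (n-1)`. -/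
def esymm {K : Type*} [CommRing K] {n : ℕ} (l : ℕ) (t : Fin n → K) : K :=
  ∑ S ∈ Finset.powersetCard l (Finset.univ : Finset (Fin n)), ∏ j ∈ S, t j

open Polynomial in
theorem exists_inv_hom (K : Type*) [Field K] : ∃ φ : RatFunc K →+* RatFunc K,
    φ RatFunc.X = (RatFunc.X)⁻¹ ∧ ∀ a, φ (RatFunc.C a) = RatFunc.C a := by
  have ht : Transcendental K ((RatFunc.X : RatFunc K)⁻¹) := by
    intro h
    rw [IsAlgebraic.inv_iff] at h
    exact RatFunc.transcendental_X h
  have hinj := transcendental_iff_injective.1 ht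
  refine ⟨(RatFunc.liftAlgHom (aeval (R := K) ((RatFunc.X : RatFunc K)⁻¹))
    (nonZeroDivisors_le_comap_nonZeroDivisors_of_injective _ hinj)).toRingHom, ?_, ?_⟩
  · have := RatFunc.liftAlgHom_apply_div (aeval (R := K) ((RatFunc.X : RatFunc K)⁻¹))
      (nonZeroDivisors_le_comap_nonZeroDivisors_of_injective _ hinj) X 1
    simpa using this
  · intro a
    rw [← RatFunc.algebraMap_eq_C]
    exact AlgHom.commutes _ a

theorem esymm_inv {K : Type*} [Field K] {n l : ℕ} (hl : l ≤ n) (t : Fin n → K)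
    (ht : ∀ j, t j ≠ 0) :
    esymm l (fun j => (t j)⁻¹) * ∏ j, t j = esymm (n - l) t := by
  unfold esymm
  rw [Finset.sum_mul]
  refine Finset.sum_bij' (fun S _ => Sᶜ) (fun S _ => Sᶜ) ?_ ?_ ?_ ?_ ?_
  · intro S hS
    simp only [Finset.mem_powersetCard, Finset.subset_univ, true_and] at hS ⊢
    rw [Finset.card_compl, hS, Fintype.card_fin]
  · intro S hS
    simp only [Finset.mem_powersetCard, Finset.subset_univ, true_and] at hS ⊢
    rw [Finset.card_compl, hS, Fintype.card_fin]
    omega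
  · intro S _
    simp
  · intro S _
    simp
  · intro S _
    rw [← Finset.prod_mul_prod_compl S t, ← mul_assoc, ← Finset.prod_mul_distrib,
      Finset.prod_congr rfl (fun j _ => inv_mul_cancel₀ (ht j))]
    simp

theorem term_inv {K : Type*} [Field K] {n l : ℕ} (hl : l ≤ n) (t : Fin n → K)
    (ht : ∀ j, t j ≠ 0) :
    esymm l (fun j => (t j)⁻¹) / ∏ j, (1 - (t j)⁻¹)
      = (-1) ^ n * (esymm (n - l) t / ∏ j, (1 - t j)) := by
  have hP : ∏ j, t j ≠ 0 := Finset.prod_ne_zero_iff.2 fun j _ => ht j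
  have hD : (∏ j, (1 - (t j)⁻¹)) * ∏ j, t j = (-1) ^ n * ∏ j, (1 - t j) := by
    rw [← Finset.prod_mul_distrib]
    have : ∀ j ∈ Finset.univ, (1 - (t j)⁻¹) * t j = (-1) * (1 - t j) := by
      intro j _
      rw [sub_mul, inv_mul_cancel₀ (ht j)]
      ring
    rw [Finset.prod_congr rfl this, Finset.prod_mul_distrib]
    simp
  rw [← mul_div_mul_right _ _ hP, esymm_inv hl t ht, hD, div_mul_eq_div_div, div_eq_mul_inv,
    div_eq_mul_inv, div_eq_mul_inv, ← inv_pow, inv_neg_one]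
  ring

/-- Lemma 2.3 of the paper: `χ^l(M) = (-1)^n χ^{n-l}(M)`, with rigidity
(constancy of each `χ_l` in `ℚ(q)`) taken as a hypothesis. -/
theorem stmt_2 (m n : ℕ) (hm : 0 < m) (hn : 0 < n)
    (ε : Fin m → ℚ) (hε : ∀ i, ε i = 1 ∨ ε i = -1)
    (w : Fin m → Fin n → ℤ) (hw : ∀ i j, w i j ≠ 0)
    (c : ℕ → ℚ)
    (hc : ∀ l ≤ n,
      ∑ i, RatFunc.C (ε i) *
          esymm l (fun j => (RatFunc.X : RatFunc ℚ) ^ (w i j)) /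
            ∏ j, (1 - (RatFunc.X : RatFunc ℚ) ^ (w i j))
        = RatFunc.C (c l)) :
    ∀ l ≤ n, c l = (-1) ^ n * c (n - l) := by
  obtain ⟨φ, hX, hC⟩ := exists_inv_hom ℚ
  intro l hl
  have h := congrArg φ (hc l hl)
  rw [hC, map_sum] at h
  apply RatFunc.C_injective
  rw [← h, map_mul, ← hc (n - l) (Nat.sub_le n l), Finset.mul_sum]
  refine Finset.sum_congr rfl fun i _ => ?_
  have ht := term_inv hl (fun j => (RatFunc.X : RatFunc ℚ) ^ (w i j))
    (fun j => zpow_ne_zero _ RatFunc.X_ne_zero)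
  have he : φ (esymm l (fun j => (RatFunc.X : RatFunc ℚ) ^ (w i j)))
      = esymm l (fun j => ((RatFunc.X : RatFunc ℚ) ^ (w i j))⁻¹) := by
    simp only [esymm, map_sum, map_prod, map_zpow₀, hX, inv_zpow]
  have hd : φ (∏ j, (1 - (RatFunc.X : RatFunc ℚ) ^ (w i j)))
      = ∏ j, (1 - ((RatFunc.X : RatFunc ℚ) ^ (w i j))⁻¹) := by
    simp only [map_sub, map_one, map_prod, map_zpow₀, hX, inv_zpow]
  rw [map_div₀, map_mul, hC, he, hd, mul_div_assoc, ht, map_pow, map_neg, map_one]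
  ring
end

section
/- Let m be a positive integer, let n be an odd positive integer, and for each i = 1,…,m let ε_i ∈ {1, −1} and let w_{i,1},…,w_{i,n} be nonzero integers. Suppose there is a real constant c such that for every real q with q > 0 and q ≠ 1 one has ∑_{i=1}^m ε_i ∏_{j=1}^n (1 + q^{w_{i,j}})/(1 − q^{w_{i,j}}) = c. Then c = 0. -/
/-- Corollary 2.5 of the paper: the signature (the `T_{1,1}`-genus) of a unitary
`S^1`-manifold of real dimension `2n` with isolated fixed points vanishes when `n`
is odd, with rigidity (constancy in `q`) taken as a hypothesis. -/
theorem stmt_3 (m n : ℕ) (hm : 0 < m) (hn : 0 < n) (hodd : Odd n)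
    (ε : Fin m → ℝ) (hε : ∀ i, ε i = 1 ∨ ε i = -1)
    (w : Fin m → Fin n → ℤ) (hw : ∀ i j, w i j ≠ 0)
    (c : ℝ)
    (hc : ∀ q : ℝ, 0 < q → q ≠ 1 →
      ∑ i, ε i * ∏ j, (1 + q ^ (w i j)) / (1 - q ^ (w i j)) = c) :
    c = 0 := by
  have h1 := hc 2 (by norm_num) (by norm_num)
  have h2 := hc 2⁻¹ (by norm_num) (by norm_num)
  have key : ∀ i j, (1 + (2⁻¹ : ℝ) ^ (w i j)) / (1 - (2⁻¹ : ℝ) ^ (w i j))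
      = -((1 + (2 : ℝ) ^ (w i j)) / (1 - (2 : ℝ) ^ (w i j))) := by
    intro i j
    have hx : (2 : ℝ) ^ (w i j) ≠ 0 := by positivity
    have hx1 : (2 : ℝ) ^ (w i j) ≠ 1 := by
      intro h
      rw [zpow_eq_one_iff_right₀ (by norm_num) (by norm_num)] at h
      exact hw i j h
    rw [inv_zpow]
    generalize (2 : ℝ) ^ (w i j) = x at hx hx1
    have a : 1 - x ≠ 0 := sub_ne_zero.mpr hx1.symm
    have b : 1 - x⁻¹ ≠ 0 := sub_ne_zero.mpr (fun h => hx1 (inv_eq_one.mp h.symm))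
    rw [← neg_div, div_eq_div_iff b a]
    field_simp
    ring
  simp only [key, Finset.prod_neg, Finset.card_univ, Fintype.card_fin, hodd.neg_one_pow,
    neg_one_mul, mul_neg, Finset.sum_neg_distrib] at h2
  rw [h1] at h2
  linarith
end

section
/- Let m, n be positive integers, and for each i = 1,…,m let ε_i ∈ {1, −1} and let w_{i,1},…,w_{i,n} be nonzero integers. For 0 ≤ l ≤ n define in ℚ(q): χ_l = ∑_{i=1}^m ε_i · σ_l(q^{w_{i,1}},…,q^{w_{i,n}}) / ∏_{j=1}^n (1 − q^{w_{i,j}}), and let χ_l' denote the same expression with every weight w_{i,j} replaced by −w_{i,j}. Then χ_l' = (−1)^n · χ_{n−l} for all 0 ≤ l ≤ n. -/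
theorem esymm_inv_aux {K : Type*} [Field K] {n : ℕ} (l : ℕ) (hl : l ≤ n) (t : Fin n → K)
    (ht : ∀ j, t j ≠ 0) :
    esymm l (fun j => (t j)⁻¹) = esymm (n - l) t / ∏ j, t j := by
  have hT : ∏ j, t j ≠ 0 := Finset.prod_ne_zero_iff.mpr fun j _ => ht j
  unfold esymm
  rw [Finset.sum_div]
  refine Finset.sum_bij' (fun S _ => Sᶜ) (fun S _ => Sᶜ) ?_ ?_ ?_ ?_ ?_
  · intro S hS
    simp only [Finset.mem_powersetCard, Finset.subset_univ, true_and] at hS ⊢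
    rw [Finset.card_compl, hS, Fintype.card_fin]
  · intro S hS
    simp only [Finset.mem_powersetCard, Finset.subset_univ, true_and] at hS ⊢
    rw [Finset.card_compl, hS, Fintype.card_fin]
    omega
  · intro S _
    simp
  · intro S _
    simp
  · intro S _
    have hS : ∏ j ∈ S, t j ≠ 0 := Finset.prod_ne_zero_iff.mpr fun j _ => ht j
    rw [Finset.prod_inv_distrib, eq_div_iff hT, ← Finset.prod_mul_prod_compl S t,
      inv_mul_cancel_left₀ hS]

theorem prod_inv_aux {K : Type*} [Field K] {n : ℕ} (t : Fin n → K)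
    (ht : ∀ j, t j ≠ 0) :
    ∏ j, (1 - (t j)⁻¹) = (-1) ^ n * (∏ j, (1 - t j)) / ∏ j, t j := by
  have h : ∀ j, 1 - (t j)⁻¹ = (-1) * (1 - t j) / t j := by
    intro j
    have := ht j
    field_simp
    ring
  simp only [h]
  rw [Finset.prod_div_distrib, Finset.prod_mul_distrib]
  simp

/-- The rational-function identity of Lemma 2.3 of the paper, summed over all fixed
points with signs: replacing every weight by its negative in `χ_l` yields
`(-1)^n · χ_{n-l}`. -/
theorem stmt_6 (m n : ℕ) (hm : 0 < m) (hn : 0 < n)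
    (ε : Fin m → ℚ) (hε : ∀ i, ε i = 1 ∨ ε i = -1)
    (w : Fin m → Fin n → ℤ) (hw : ∀ i j, w i j ≠ 0)
    (l : ℕ) (hl : l ≤ n) :
    ∑ i, RatFunc.C (ε i) *
        esymm l (fun j => (RatFunc.X : RatFunc ℚ) ^ (-(w i j))) /
          ∏ j, (1 - (RatFunc.X : RatFunc ℚ) ^ (-(w i j)))
      = (-1) ^ n *
        ∑ i, RatFunc.C (ε i) *
          esymm (n - l) (fun j => (RatFunc.X : RatFunc ℚ) ^ (w i j)) /
            ∏ j, (1 - (RatFunc.X : RatFunc ℚ) ^ (w i j)) := by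
  rw [Finset.mul_sum]
  refine Finset.sum_congr rfl fun i _ => ?_
  have ht : ∀ j, (RatFunc.X : RatFunc ℚ) ^ (w i j) ≠ 0 := fun j =>
    zpow_ne_zero _ RatFunc.X_ne_zero
  have hT : ∏ j, (RatFunc.X : RatFunc ℚ) ^ (w i j) ≠ 0 :=
    Finset.prod_ne_zero_iff.mpr fun j _ => ht j
  simp only [zpow_neg]
  rw [esymm_inv_aux l hl _ ht, prod_inv_aux _ ht, mul_div_assoc, div_div_div_cancel_right₀ hT]
  have h1 : ((-1 : RatFunc ℚ) ^ n)⁻¹ = (-1) ^ n := by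
    rw [← inv_pow, inv_neg, inv_one]
  rw [div_eq_mul_inv, mul_inv, h1, div_eq_mul_inv]
  ring
end

section
/- Let n be a positive integer, let w_1,…,w_n be nonzero integers, let 0 ≤ l ≤ n, and set d = #{j ∈ {1,…,n} : w_j < 0}. Then the function q ↦ σ_l(q^{w_1},…,q^{w_n}) / ∏_{j=1}^n (1 − q^{w_j}), defined for real q with 0 < q < 1, tends, as q tends to 0 from the right, to (−1)^l if d = l, and to 0 if d ≠ l. -/
open Filter Topology

theorem aux_pow (m : ℤ) (hm : 0 < m) :
    Tendsto (fun q : ℝ => q ^ m) (nhdsWithin 0 (Set.Ioo 0 1)) (nhds 0) := by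
  lift m to ℕ using hm.le
  have hm' : m ≠ 0 := by omega
  have h : Tendsto (fun q : ℝ => q ^ m) (nhds 0) (nhds (0 ^ m)) := (continuous_pow m).tendsto 0
  rw [zero_pow hm'] at h
  simpa using h.mono_left nhdsWithin_le_nhds

theorem aux_factor (m : ℤ) (hm : m ≠ 0) (P : Prop) [Decidable P] :
    Tendsto (fun q : ℝ => (if P then q ^ m else 1) / (1 - q ^ m)) (nhdsWithin 0 (Set.Ioo 0 1))
      (nhds (if (P ↔ m < 0) then (if P then -1 else 1) else 0)) := by
  rcases lt_or_gt_of_ne hm with h | h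
  · have hu := aux_pow (-m) (by omega)
    have key : Tendsto (fun q : ℝ => (if P then 1 else q ^ (-m)) / (q ^ (-m) - 1))
        (nhdsWithin 0 (Set.Ioo 0 1)) (nhds ((if P then 1 else 0) / (0 - 1))) := by
      refine Tendsto.div ?_ (hu.sub_const 1) (by norm_num)
      split_ifs
      · exact tendsto_const_nhds
      · exact hu
    have e : (if (P ↔ m < 0) then (if P then -1 else 1) else 0 : ℝ)
        = (if P then 1 else 0) / (0 - 1) := by
      by_cases hP : P <;> simp [hP, h]
    rw [e]
    refine key.congr' ?_
    filter_upwards [self_mem_nhdsWithin] with q hq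
    have hq0 : q ^ m ≠ 0 := zpow_ne_zero _ hq.1.ne'
    have e2 : q ^ (-m) - 1 = (1 - q ^ m) / q ^ m := by
      rw [zpow_neg]; field_simp
    rw [e2, zpow_neg]
    by_cases hP : P
    · simp [hP]
    · simp only [hP, if_false]
      rw [div_div_eq_mul_div, inv_mul_cancel₀ hq0]
  · have hu := aux_pow m h
    have e : (if (P ↔ m < 0) then (if P then -1 else 1) else 0 : ℝ)
        = (if P then 0 else 1) / (1 - 0) := by
      by_cases hP : P <;> simp [hP, h.le]
    rw [e]
    refine Tendsto.div ?_ (hu.const_sub 1) (by norm_num)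
    split_ifs
    · exact hu
    · exact tendsto_const_nhds

/-- The constant-term computation of Section 4 of the paper: a fixed point
contributes `(-1)^l` to `χ^l(M)` exactly when it has `l` negative weights. -/
theorem stmt_10 (n : ℕ) (hn : 0 < n)
    (w : Fin n → ℤ) (hw : ∀ j, w j ≠ 0)
    (l : ℕ) (hl : l ≤ n)
    (d : ℕ) (hd : d = (Finset.univ.filter fun j => w j < 0).card) :
    Tendsto (fun q : ℝ => esymm l (fun j => q ^ (w j)) / ∏ j, (1 - q ^ (w j)))
      (nhdsWithin 0 (Set.Ioo 0 1))
      (nhds (if d = l then (-1 : ℝ) ^ l else 0)) := by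
  classical
  have hterm : ∀ S ∈ Finset.powersetCard l (Finset.univ : Finset (Fin n)),
      Tendsto (fun q : ℝ => ∏ j, ((if j ∈ S then q ^ (w j) else 1) / (1 - q ^ (w j))))
        (nhdsWithin 0 (Set.Ioo 0 1))
        (nhds (if S = Finset.univ.filter (fun j => w j < 0) then (-1 : ℝ) ^ l else 0)) := by
    intro S hS
    have h := tendsto_finsetProd (Finset.univ : Finset (Fin n))
      (fun j _ => aux_factor (w j) (hw j) (j ∈ S))
    convert h using 2
    split_ifs with hSN
    · have hiff : ∀ j, (j ∈ S ↔ w j < 0) := by intro j; rw [hSN]; simp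
      rw [Finset.prod_congr rfl (fun j _ => if_pos (hiff j))]
      rw [Finset.prod_ite_mem, Finset.univ_inter, Finset.prod_const,
        (Finset.mem_powersetCard.1 hS).2]
    · have : ∃ j, ¬ (j ∈ S ↔ w j < 0) := by
        by_contra! hc
        exact hSN (by ext j; simp [hc j])
      obtain ⟨j, hj⟩ := this
      exact (Finset.prod_eq_zero (Finset.mem_univ j) (if_neg hj)).symm
  have hsum := tendsto_finsetSum _ hterm
  have e : (∑ S ∈ Finset.powersetCard l (Finset.univ : Finset (Fin n)),
      (if S = Finset.univ.filter (fun j => w j < 0) then (-1 : ℝ) ^ l else 0))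
      = if d = l then (-1 : ℝ) ^ l else 0 := by
    rw [Finset.sum_ite_eq']
    simp [Finset.mem_powersetCard, hd]
  rw [e] at hsum
  refine hsum.congr ?_
  intro q
  rw [esymm, Finset.sum_div]
  refine Finset.sum_congr rfl fun S _ => ?_
  rw [Finset.prod_div_distrib, Finset.prod_ite_mem, Finset.univ_inter]
end

section
/- Let K be a field, let m ≥ 2 be an integer, and let c_1,…,c_m ∈ K satisfy c_i ≠ 1 for every 2 ≤ i ≤ m. Define u_0 = 1, u_1 = (c_1 − c_2)/(c_2 − 1), u_i = (c_1 − 1)(c_i − c_{i+1}) / ((c_i − 1)(c_{i+1} − 1)) for 2 ≤ i ≤ m − 1, and u_m = c_m(1 − c_1)/(c_m − 1). Then: (a) for every 1 ≤ i ≤ m, c_i · (u_0 + u_1 + ⋯ + u_{i−1}) + (u_i + u_{i+1} + ⋯ + u_m) = 0; (b) for every 2 ≤ l ≤ m, u_0 + u_1 + ⋯ + u_{l−1} = (c_1 − 1)/(c_l − 1) and u_l + u_{l+1} + ⋯ + u_m = −c_l(c_1 − 1)/(c_l − 1); (c) u_1 + u_2 + ⋯ + u_m = −c_1. -/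
/-- The explicit solution (equations (3.9) and (3.10) of the paper) of the triangular
linear system `W(q)·u = 0` arising in the proof of the key Lemma 3.1. -/
theorem stmt_12 {K : Type*} [Field K] (m : ℕ) (hm : 2 ≤ m)
    (c : ℕ → K) (hc : ∀ i, 2 ≤ i → i ≤ m → c i ≠ 1)
    (u : ℕ → K)
    (hu0 : u 0 = 1)
    (hu1 : u 1 = (c 1 - c 2) / (c 2 - 1))
    (hui : ∀ i, 2 ≤ i → i ≤ m - 1 →
      u i = (c 1 - 1) * (c i - c (i + 1)) / ((c i - 1) * (c (i + 1) - 1)))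
    (hum : u m = c m * (1 - c 1) / (c m - 1)) :
    (∀ i, 1 ≤ i → i ≤ m →
        c i * (∑ j ∈ Finset.range i, u j) + ∑ j ∈ Finset.Icc i m, u j = 0) ∧
    (∀ l, 2 ≤ l → l ≤ m →
        (∑ j ∈ Finset.range l, u j = (c 1 - 1) / (c l - 1) ∧
         ∑ j ∈ Finset.Icc l m, u j = -(c l * (c 1 - 1)) / (c l - 1))) ∧
    (∑ j ∈ Finset.Icc 1 m, u j = -(c 1)) := by
  have hP : ∀ l, 2 ≤ l → l ≤ m → ∑ j ∈ Finset.range l, u j = (c 1 - 1) / (c l - 1) := by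
    intro l hl
    induction l, hl using Nat.le_induction with
    | base =>
      intro h
      have h2 : c 2 - 1 ≠ 0 := sub_ne_zero.mpr (hc 2 le_rfl h)
      rw [Finset.sum_range_succ, Finset.sum_range_one, hu0, hu1]
      field_simp
      ring
    | succ k hk ih =>
      intro h
      have h1 : c k - 1 ≠ 0 := sub_ne_zero.mpr (hc k hk (by omega))
      have h2 : c (k + 1) - 1 ≠ 0 := sub_ne_zero.mpr (hc (k + 1) (by omega) h)
      rw [Finset.sum_range_succ, ih (by omega), hui k hk (by omega)]
      field_simp
      ring
  have hT : ∑ j ∈ Finset.range (m + 1), u j = 1 - c 1 := by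
    have h2 : c m - 1 ≠ 0 := sub_ne_zero.mpr (hc m hm le_rfl)
    rw [Finset.sum_range_succ, hP m hm le_rfl, hum]
    field_simp
    ring
  have hS : ∀ l, l ≤ m →
      ∑ j ∈ Finset.Icc l m, u j = 1 - c 1 - ∑ j ∈ Finset.range l, u j := by
    intro l hl
    have h := Finset.sum_range_add_sum_Ico u (show l ≤ m + 1 by omega)
    have e : Finset.Icc l m = Finset.Ico l (m + 1) := by
      ext x
      simp only [Finset.mem_Icc, Finset.mem_Ico]
      omega
    rw [e, ← hT, ← h]
    ring
  refine ⟨?_, ?_, ?_⟩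
  · intro i hi him
    rw [hS i him]
    rcases Nat.lt_or_ge i 2 with h | h
    · obtain rfl : i = 1 := by omega
      rw [Finset.sum_range_one, hu0]
      ring
    · have h2 : c i - 1 ≠ 0 := sub_ne_zero.mpr (hc i h him)
      rw [hP i h him]
      field_simp
      ring
  · intro l hl hlm
    refine ⟨hP l hl hlm, ?_⟩
    have h2 : c l - 1 ≠ 0 := sub_ne_zero.mpr (hc l hl hlm)
    rw [hS l hlm, hP l hl hlm]
    field_simp
    ring
  · rw [hS 1 (by omega), Finset.sum_range_one, hu0]
    ring
end
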